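/- Let ψ be a function from the set of factors of ω to ℝ such that: ψ(α) > 0 for every factor α; ψ(0) + ψ(1) = 1; and for every factor α, ψ(α) = Σ_{i ∈ {0,1}, iα a factor} ψ(iα) and ψ(α) = Σ_{i ∈ {0,1}, αi a factor} ψ(αi). Then for every n ≥ 0: ψ(0^{(n)} 0^{(n)}) = ψ(1^{(n)} 1^{(n)}) = 1/(6·2^n) and ψ(0^{(n)} 1^{(n)}) = ψ(1^{(n)} 0^{(n)}) = 1/(3·2^n). -/

import Mathlib

/-- One-sided Thue–Morse sequence: parity of the binary digit sum. -/
def tm (n : ℕ) : ℕ := (Nat.digits 2 n).sum % 2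

/-- Two-sided Thue–Morse sequence `ω : ℤ → {0,1}`. -/
def tmZ (n : ℤ) : ℕ := if 0 ≤ n then tm n.toNat else tm (-n - 1).toNat

/-- The block `ω_[m, m+k-1]` of the two-sided Thue–Morse sequence. -/
def tmBlock (m : ℤ) (k : ℕ) : List ℕ := (List.range k).map fun j => tmZ (m + j)

/-- A (nonempty) word is a factor of the two-sided Thue–Morse sequence. -/
def IsFactor (α : List ℕ) : Prop := α ≠ [] ∧ ∃ m : ℤ, α = tmBlock m α.length

/-- The words `i⁽ⁿ⁾`: `blk i 0 = [i]`, `blk i (n+1) = blk i n ++ blk (1-i) n`. -/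
def blk : ℕ → ℕ → List ℕ
  | i, 0 => [i]
  | i, n + 1 => blk i n ++ blk (1 - i) n

/-!
Let `μ` be the Thue–Morse substitution `0 ↦ 01, 1 ↦ 10`. A word of the form `μ l` with `|l| ≥ 2`
occurs only at even positions, since Thue–Morse contains no cube `xxx`. Hence `μ l` is
continued on either side by a block `01` or `10`, and `φ ∘ μ` is again additive whenever `φ` is.

With `a = φ(00) = φ(11)` and `c = φ(01) = φ(10)`, additivity gives `φ(μ(00)) = (c - a) / 2` and
`φ(μ(01)) = a`. So passing from `φ` to `φ ∘ μ` halves `a + c` and changes the sign of `c - 2a`.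
Nonnegativity gives `|c - 2a| ≤ 2(a + c)`, also after `n` substitutions, where the right-hand side
has become `2(a + c) / 2ⁿ` while the left-hand side is unchanged; therefore `c = 2a`.
-/

theorem tm_lt_two (n : ℕ) : tm n < 2 := Nat.mod_lt _ two_pos

theorem tm_two_mul (n : ℕ) : tm (2 * n) = tm n := by
  rcases n.eq_zero_or_pos with rfl | hn
  · rfl
  · simp [tm, Nat.digits_def' one_lt_two (Nat.mul_pos two_pos hn)]

theorem tm_two_mul_add_one (n : ℕ) : tm (2 * n + 1) = 1 - tm n := by
  have hdigits : Nat.digits 2 (2 * n + 1) = 1 :: Nat.digits 2 n := by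
    rw [Nat.digits_def' one_lt_two (by omega)]
    congr 2 <;> omega
  rw [tm, tm, hdigits, List.sum_cons]
  omega

theorem tm_mul_two_pow_add (a : ℕ) {r j : ℕ} (hj : j < 2 ^ r) :
    tm (a * 2 ^ r + j) = (tm a + tm j) % 2 := by
  induction r generalizing j with
  | zero =>
    obtain rfl : j = 0 := by simpa using hj
    simp [tm]
  | succ r ih =>
    rw [pow_succ] at hj
    obtain ⟨q, rfl | rfl⟩ := j.even_or_odd'
    · rw [show a * 2 ^ (r + 1) + 2 * q = 2 * (a * 2 ^ r + q) by ring, tm_two_mul, tm_two_mul,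
        ih (by omega)]
    · rw [show a * 2 ^ (r + 1) + (2 * q + 1) = 2 * (a * 2 ^ r + q) + 1 by ring,
        tm_two_mul_add_one, tm_two_mul_add_one, ih (by omega)]
      have := tm_lt_two q
      omega

theorem tm_two_pow_sub_one_sub {r i : ℕ} (hi : i < 2 ^ r) :
    tm (2 ^ r - 1 - i) = (tm i + r) % 2 := by
  induction r generalizing i with
  | zero =>
    obtain rfl : i = 0 := by simpa using hi
    simp [tm]
  | succ r ih =>
    rw [pow_succ] at hi
    obtain ⟨p, rfl | rfl⟩ := i.even_or_odd'
    · rw [show 2 ^ (r + 1) - 1 - 2 * p = 2 * (2 ^ r - 1 - p) + 1 by omega, tm_two_mul_add_one,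
        tm_two_mul, ih (by omega)]
      omega
    · rw [show 2 ^ (r + 1) - 1 - (2 * p + 1) = 2 * (2 ^ r - 1 - p) by omega, tm_two_mul,
        tm_two_mul_add_one, ih (by omega)]
      have := tm_lt_two p
      omega

theorem not_tm_cube (m : ℕ) : ¬ (tm m = tm (m + 1) ∧ tm (m + 1) = tm (m + 2)) := by
  rintro ⟨h₁, h₂⟩
  obtain ⟨q, rfl | rfl⟩ := m.even_or_odd'
  · have := tm_lt_two q
    rw [tm_two_mul, tm_two_mul_add_one] at h₁
    omega
  · have := tm_lt_two (q + 1)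
    rw [show 2 * q + 1 + 1 = 2 * (q + 1) by ring,
      show 2 * q + 1 + 2 = 2 * (q + 1) + 1 by ring, tm_two_mul, tm_two_mul_add_one] at h₂
    omega

theorem tmZ_natCast (n : ℕ) : tmZ n = tm n := by simp [tmZ]

/-- `6` and `5 = 6 - 1` both have an even number of binary digits `1`, so around position
`6 * 4 ^ r` the one-sided sequence looks like the two-sided one around `0`. -/
theorem tmZ_eq_tm_of_eq_add {r n : ℕ} {z : ℤ} (hz : z.natAbs < 2 ^ (2 * r))
    (hn : (n : ℤ) = 6 * 2 ^ (2 * r) + z) : tmZ z = tm n := by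
  have hcast : (2 : ℤ) ^ (2 * r) = ((2 ^ (2 * r) : ℕ) : ℤ) := by push_cast; rfl
  rw [hcast] at hn
  unfold tmZ
  split_ifs with h
  · have := tm_lt_two z.toNat
    rw [show n = 6 * 2 ^ (2 * r) + z.toNat by omega, tm_mul_two_pow_add 6 (by omega),
      show tm 6 = 0 by norm_num [tm]]
    omega
  · have := tm_lt_two (-z - 1).toNat
    rw [show n = 5 * 2 ^ (2 * r) + (2 ^ (2 * r) - 1 - (-z - 1).toNat) by omega,
      tm_mul_two_pow_add 5 (by omega), tm_two_pow_sub_one_sub (by omega),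
      show tm 5 = 0 by norm_num [tm]]
    omega

/-- In `tmBlock` the bound variable `j` is an integer, and `List.range k` is coerced to `List ℤ`
through the list monad. -/
theorem tmBlock_eq_map_range (m : ℤ) (k : ℕ) :
    tmBlock m k = (List.range k).map fun j : ℕ => tmZ (m + j) := by
  simp [tmBlock, ← List.map_eq_flatMap]

/-- The word `l` occurs at position `m` of the one-sided Thue–Morse sequence. -/
def OccursAt (m : ℕ) (l : List ℕ) : Prop := l = (List.range' m l.length).map tm

theorem occursAt_nil (m : ℕ) : OccursAt m [] := rfl

theorem occursAt_cons {m x : ℕ} {l : List ℕ} :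
    OccursAt m (x :: l) ↔ x = tm m ∧ OccursAt (m + 1) l := by
  simp [OccursAt, List.range'_succ]

theorem occursAt_append {m : ℕ} {l₁ l₂ : List ℕ} :
    OccursAt m (l₁ ++ l₂) ↔ OccursAt m l₁ ∧ OccursAt (m + l₁.length) l₂ := by
  induction l₁ generalizing m with
  | nil => simp [occursAt_nil]
  | cons x l₁ ih =>
    rw [List.cons_append, occursAt_cons, occursAt_cons, ih, and_assoc, List.length_cons,
      Nat.add_right_comm, Nat.add_assoc m]

theorem occursAt_iff_eq_tmBlock {m : ℕ} {l : List ℕ} :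
    OccursAt m l ↔ l = tmBlock m l.length := by
  simp only [OccursAt, tmBlock_eq_map_range, List.range'_eq_map_range, List.map_map,
    Function.comp_def, ← Nat.cast_add, tmZ_natCast]

theorem exists_natCast_tmBlock_eq (m : ℤ) (k : ℕ) : ∃ n : ℕ, tmBlock n k = tmBlock m k := by
  let r := m.natAbs + k
  have hr : r < 2 ^ (2 * r) :=
    Nat.lt_two_pow_self.trans_le (Nat.pow_le_pow_right two_pos (by omega))
  have hcast : (2 : ℤ) ^ (2 * r) = ((2 ^ (2 * r) : ℕ) : ℤ) := by push_cast; rfl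
  refine ⟨(6 * 2 ^ (2 * r) + m).toNat, ?_⟩
  simp only [tmBlock_eq_map_range]
  refine List.map_congr_left fun j hj => ?_
  rw [List.mem_range] at hj
  rw [← Nat.cast_add, tmZ_natCast]
  exact (tmZ_eq_tm_of_eq_add (r := r) (by omega) (by rw [hcast]; omega)).symm

theorem isFactor_iff_exists_occursAt {l : List ℕ} :
    IsFactor l ↔ l ≠ [] ∧ ∃ m, OccursAt m l := by
  simp only [occursAt_iff_eq_tmBlock]
  refine and_congr_right fun _ => ⟨?_, fun ⟨m, hm⟩ => ⟨m, hm⟩⟩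
  rintro ⟨m, hm⟩
  obtain ⟨n, hn⟩ := exists_natCast_tmBlock_eq m l.length
  exact ⟨n, hm.trans hn.symm⟩

theorem IsFactor.of_infix {l l' : List ℕ} (h : IsFactor l) (hl' : l' <:+: l) (hne : l' ≠ []) :
    IsFactor l' := by
  obtain ⟨s, t, rfl⟩ := hl'
  obtain ⟨-, m, hm⟩ := isFactor_iff_exists_occursAt.1 h
  exact isFactor_iff_exists_occursAt.2
    ⟨hne, _, (occursAt_append.1 (occursAt_append.1 hm).1).2⟩

theorem not_isFactor_of_cube_infix {x : ℕ} {l : List ℕ} (hl : [x, x, x] <:+: l) :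
    ¬ IsFactor l := by
  intro h
  obtain ⟨-, m, hm⟩ := isFactor_iff_exists_occursAt.1 (h.of_infix hl (List.cons_ne_nil _ _))
  simp only [occursAt_cons] at hm
  obtain ⟨h₀, h₁, h₂, -⟩ := hm
  exact not_tm_cube m ⟨h₀.symm.trans h₁, h₁.symm.trans h₂⟩

theorem isFactor_pair {i j : ℕ} (hi : i < 2) (hj : j < 2) : IsFactor [i, j] := by
  suffices ∃ m, OccursAt m [i, j] from
    isFactor_iff_exists_occursAt.2 ⟨List.cons_ne_nil _ _, this⟩
  interval_cases i <;> interval_cases j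
  · exact ⟨5, by norm_num [occursAt_cons, occursAt_nil, tm]⟩
  · exact ⟨0, by norm_num [occursAt_cons, occursAt_nil, tm]⟩
  · exact ⟨2, by norm_num [occursAt_cons, occursAt_nil, tm]⟩
  · exact ⟨1, by norm_num [occursAt_cons, occursAt_nil, tm]⟩

theorem isFactor_singleton {i : ℕ} (hi : i < 2) : IsFactor [i] :=
  (isFactor_pair hi hi).of_infix (List.prefix_append [i] [i]).isInfix (List.cons_ne_nil _ _)

/-- The Thue–Morse substitution `0 ↦ 01`, `1 ↦ 10`, extended to the alphabet `ℕ` by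
`x ↦ x (1 - x)` with truncated subtraction. -/
def tmSubst (l : List ℕ) : List ℕ := l.flatMap fun x => [x, 1 - x]

theorem tmSubst_cons (x : ℕ) (l : List ℕ) : tmSubst (x :: l) = x :: (1 - x) :: tmSubst l := rfl

theorem tmSubst_append (l₁ l₂ : List ℕ) : tmSubst (l₁ ++ l₂) = tmSubst l₁ ++ tmSubst l₂ :=
  List.flatMap_append

theorem length_tmSubst (l : List ℕ) : (tmSubst l).length = 2 * l.length := by
  simp [tmSubst, List.length_flatMap, mul_comm]

theorem tmSubst_iterate_append (n : ℕ) (l₁ l₂ : List ℕ) :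
    tmSubst^[n] (l₁ ++ l₂) = tmSubst^[n] l₁ ++ tmSubst^[n] l₂ :=
  (Function.Semiconj₂.iterate tmSubst_append n) l₁ l₂

theorem blk_eq_tmSubst_iterate {i : ℕ} (hi : i < 2) (n : ℕ) : blk i n = tmSubst^[n] [i] := by
  induction n generalizing i with
  | zero => rfl
  | succ n ih =>
    rw [blk, ih hi, ih (show 1 - i < 2 by omega), ← tmSubst_iterate_append]
    rfl

theorem blk_append_blk {i j : ℕ} (hi : i < 2) (hj : j < 2) (n : ℕ) :
    blk i n ++ blk j n = tmSubst^[n] [i, j] := by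
  rw [blk_eq_tmSubst_iterate hi, blk_eq_tmSubst_iterate hj, ← tmSubst_iterate_append]
  rfl

theorem occursAt_two_mul_tmSubst {m : ℕ} {l : List ℕ} :
    OccursAt (2 * m) (tmSubst l) ↔ OccursAt m l := by
  induction l generalizing m with
  | nil => simp [tmSubst, occursAt_nil]
  | cons x l ih =>
    simp only [tmSubst_cons, occursAt_cons, tm_two_mul, tm_two_mul_add_one,
      show 2 * m + 1 + 1 = 2 * (m + 1) by ring, ih]
    exact ⟨fun ⟨hx, _, hl⟩ => ⟨hx, hl⟩, fun ⟨hx, hl⟩ => ⟨hx, by rw [hx], hl⟩⟩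

theorem OccursAt.even_of_tmSubst {m : ℕ} {l : List ℕ} (h : OccursAt m (tmSubst l))
    (hl : 2 ≤ l.length) : Even m := by
  by_contra hm
  obtain ⟨q, rfl⟩ := Nat.not_even_iff_odd.1 hm
  match l, hl with
  | x :: y :: l, _ =>
    simp only [tmSubst_cons, occursAt_cons, tm_two_mul_add_one,
      show 2 * q + 1 + 1 = 2 * (q + 1) by ring, tm_two_mul,
      show 2 * (q + 1) + 1 + 1 = 2 * (q + 2) by ring] at h
    obtain ⟨hx, hx', hy, hy', -⟩ := h
    have := tm_lt_two q
    have := tm_lt_two (q + 1)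
    exact not_tm_cube q ⟨by omega, by omega⟩

theorem isFactor_tmSubst {l : List ℕ} : IsFactor (tmSubst l) ↔ IsFactor l := by
  simp only [isFactor_iff_exists_occursAt]
  match l with
  | [] => rfl
  | [x] =>
    have hx {m} (h : OccursAt m (tmSubst [x])) : OccursAt m [x] :=
      occursAt_cons.2 ⟨(occursAt_cons.1 h).1, occursAt_nil _⟩
    simp only [tmSubst_cons, ne_eq, reduceCtorEq, not_false_eq_true, true_and]
    exact ⟨fun ⟨m, h⟩ => ⟨m, hx h⟩, fun ⟨m, h⟩ => ⟨2 * m, occursAt_two_mul_tmSubst.2 h⟩⟩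
  | x :: y :: l =>
    simp only [tmSubst_cons x, ne_eq, reduceCtorEq, not_false_eq_true, true_and]
    refine ⟨fun ⟨m, h⟩ => ?_, fun ⟨m, h⟩ => ⟨2 * m, occursAt_two_mul_tmSubst.2 h⟩⟩
    obtain ⟨q, rfl⟩ := even_iff_two_dvd.1 (h.even_of_tmSubst (l := x :: y :: l) (by simp))
    exact ⟨q, occursAt_two_mul_tmSubst.1 h⟩

theorem isFactor_tmSubst_iterate {n : ℕ} {l : List ℕ} :
    IsFactor (tmSubst^[n] l) ↔ IsFactor l := by
  induction n with
  | zero => rfl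
  | succ n ih => rw [Function.iterate_succ_apply', isFactor_tmSubst, ih]

theorem not_isFactor_square_append_tmSubst (x : ℕ) {l : List ℕ} (hl : 2 ≤ l.length) :
    ¬ IsFactor (x :: x :: tmSubst l) := by
  intro h
  obtain ⟨-, m, hm⟩ := isFactor_iff_exists_occursAt.1 h
  obtain ⟨hx, hx', hm⟩ := by simpa only [occursAt_cons] using hm
  obtain ⟨p, rfl⟩ : 2 ∣ m := by
    have := even_iff_two_dvd.1 (hm.even_of_tmSubst hl)
    omega
  rw [tm_two_mul] at hx
  rw [tm_two_mul_add_one] at hx'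
  omega

theorem not_isFactor_tmSubst_append_square (x : ℕ) {l : List ℕ} (hl : 2 ≤ l.length) :
    ¬ IsFactor (tmSubst l ++ [x, x]) := by
  intro h
  obtain ⟨-, m, hm⟩ := isFactor_iff_exists_occursAt.1 h
  obtain ⟨hm, hx, hx', -⟩ := by simpa only [occursAt_append, occursAt_cons] using hm
  obtain ⟨q, rfl⟩ := even_iff_two_dvd.1 (hm.even_of_tmSubst hl)
  rw [length_tmSubst, ← mul_add] at hx hx'
  rw [tm_two_mul] at hx
  rw [tm_two_mul_add_one] at hx'
  omega

/-- A function on words that vanishes off the factors of the Thue–Morse sequence and is additive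
under extension by one letter, on the left and on the right. Additivity is only required for words
of length at least `2`: with this restriction the notion is stable under precomposition with
`tmSubst`, because the position parity of `tmSubst l` is determined only for `2 ≤ l.length`. -/
structure IsFactorAdditive {R : Type*} [AddCommMonoid R] (φ : List ℕ → R) : Prop where
  eq_zero : ∀ l, ¬ IsFactor l → φ l = 0
  eq_add_cons : ∀ l, 2 ≤ l.length → φ l = φ (0 :: l) + φ (1 :: l)
  eq_add_concat : ∀ l, 2 ≤ l.length → φ l = φ (l ++ [0]) + φ (l ++ [1])

namespace IsFactorAdditive

section AddCommMonoid

variable {R : Type*} [AddCommMonoid R] {φ : List ℕ → R}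

theorem eq_zero_of_cube (h : IsFactorAdditive φ) (x : ℕ) {l : List ℕ} (hl : [x, x, x] <:+: l) :
    φ l = 0 :=
  h.eq_zero l (not_isFactor_of_cube_infix hl)

theorem comp_tmSubst (h : IsFactorAdditive φ) : IsFactorAdditive fun l => φ (tmSubst l) where
  eq_zero l hl := h.eq_zero _ (mt isFactor_tmSubst.1 hl)
  eq_add_cons l hl := by
    have hlen := length_tmSubst l
    have hsquare (x : ℕ) : φ (x :: x :: tmSubst l) = 0 :=
      h.eq_zero _ (not_isFactor_square_append_tmSubst x hl)
    calc φ (tmSubst l)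
        = φ (0 :: tmSubst l) + φ (1 :: tmSubst l) := h.eq_add_cons _ (by omega)
      _ = φ (1 :: 0 :: tmSubst l) + φ (0 :: 1 :: tmSubst l) := by
          rw [h.eq_add_cons (0 :: tmSubst l) (by simp; omega),
            h.eq_add_cons (1 :: tmSubst l) (by simp; omega), hsquare, hsquare, zero_add, add_zero]
      _ = φ (tmSubst (0 :: l)) + φ (tmSubst (1 :: l)) := add_comm _ _
  eq_add_concat l hl := by
    have hlen := length_tmSubst l
    have hsquare (x : ℕ) : φ (tmSubst l ++ [x] ++ [x]) = 0 := by
      simpa using h.eq_zero _ (not_isFactor_tmSubst_append_square x hl)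
    calc φ (tmSubst l)
        = φ (tmSubst l ++ [0]) + φ (tmSubst l ++ [1]) := h.eq_add_concat _ (by omega)
      _ = φ (tmSubst l ++ [0] ++ [1]) + φ (tmSubst l ++ [1] ++ [0]) := by
          rw [h.eq_add_concat (tmSubst l ++ [0]) (by simp; omega),
            h.eq_add_concat (tmSubst l ++ [1]) (by simp; omega), hsquare, hsquare, zero_add,
            add_zero]
      _ = φ (tmSubst (l ++ [0])) + φ (tmSubst (l ++ [1])) := by
          simp [tmSubst]

theorem comp_tmSubst_iterate (h : IsFactorAdditive φ) (n : ℕ) :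
    IsFactorAdditive fun l => φ (tmSubst^[n] l) := by
  induction n with
  | zero => exact h
  | succ n ih => exact ih.comp_tmSubst

theorem apply_one_zero_zero (h : IsFactorAdditive φ) : φ [1, 0, 0] = φ [0, 0] := by
  simp [h.eq_add_cons [0, 0], h.eq_zero_of_cube 0 (List.infix_refl [0, 0, 0])]

theorem apply_zero_one_one (h : IsFactorAdditive φ) : φ [0, 1, 1] = φ [1, 1] := by
  simp [h.eq_add_cons [1, 1], h.eq_zero_of_cube 1 (List.infix_refl [1, 1, 1])]

theorem apply_one_one_zero (h : IsFactorAdditive φ) : φ [1, 1, 0] = φ [1, 1] := by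
  simp [h.eq_add_concat [1, 1], h.eq_zero_of_cube 1 (List.infix_refl [1, 1, 1])]

theorem apply_zero_one (h : IsFactorAdditive φ) : φ [0, 1] = φ [1, 0] :=
  calc φ [0, 1] = φ [0, 1, 0] + φ [0, 1, 1] := h.eq_add_concat _ le_rfl
    _ = φ [0, 1, 0] + φ [1, 1, 0] := by rw [h.apply_zero_one_one, h.apply_one_one_zero]
    _ = φ [1, 0] := (h.eq_add_cons _ le_rfl).symm

theorem apply_tmSubst_zero_one (h : IsFactorAdditive φ) : φ (tmSubst [0, 1]) = φ [1, 1] :=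
  calc φ [0, 1, 1, 0] = φ [0, 1, 1, 0] + φ [1, 1, 1, 0] := by
        rw [h.eq_zero_of_cube 1 (l := [1, 1, 1, 0]) (by decide), add_zero]
    _ = φ [1, 1, 0] := (h.eq_add_cons _ (by simp)).symm
    _ = φ [1, 1] := h.apply_one_one_zero

theorem apply_tmSubst_one_zero (h : IsFactorAdditive φ) : φ (tmSubst [1, 0]) = φ [0, 0] :=
  calc φ [1, 0, 0, 1] = φ [1, 0, 0, 0] + φ [1, 0, 0, 1] := by
        rw [h.eq_zero_of_cube 0 (l := [1, 0, 0, 0]) (by decide), zero_add]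
    _ = φ [1, 0, 0] := (h.eq_add_concat [1, 0, 0] (by simp)).symm
    _ = φ [0, 0] := h.apply_one_zero_zero

theorem apply_one_one (h : IsFactorAdditive φ) : φ [1, 1] = φ [0, 0] := by
  rw [← h.apply_tmSubst_zero_one, ← h.apply_tmSubst_one_zero, h.comp_tmSubst.apply_zero_one]

theorem apply_one_one_zero_zero (h : IsFactorAdditive φ) :
    φ [1, 1, 0, 0] = φ (tmSubst [0, 1, 0]) :=
  calc φ [1, 1, 0, 0] = φ [0, 1, 1, 0, 0] + φ [1, 1, 1, 0, 0] := h.eq_add_cons _ (by simp)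
    _ = φ [0, 1, 1, 0, 0, 0] + φ [0, 1, 1, 0, 0, 1] + 0 := by
        rw [h.eq_add_concat [0, 1, 1, 0, 0] (by simp),
          h.eq_zero_of_cube 1 (l := [1, 1, 1, 0, 0]) (by decide)]
        rfl
    _ = φ [0, 1, 1, 0, 0, 1] := by
        rw [h.eq_zero_of_cube 0 (l := [0, 1, 1, 0, 0, 0]) (by decide), zero_add, add_zero]

end AddCommMonoid

section CommRing

variable {R : Type*} [CommRing R] {φ : List ℕ → R}

theorem apply_one_one_zero_one (h : IsFactorAdditive φ) :
    φ [1, 1, 0, 1] = φ (tmSubst [0, 0]) := by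
  have h110 : φ [0, 0] = φ [1, 1, 0, 0] + φ [1, 1, 0, 1] := by
    rw [← h.apply_one_one, ← h.apply_one_one_zero]
    exact h.eq_add_concat _ (by simp)
  have h10 : φ [0, 0] = φ (tmSubst [0, 1, 0]) + φ (tmSubst [0, 0]) := by
    rw [← h.comp_tmSubst.apply_one_one, ← h.comp_tmSubst.apply_one_one_zero,
      ← h.apply_tmSubst_one_zero]
    exact h.comp_tmSubst.eq_add_cons _ le_rfl
  linear_combination h10 - h110 - h.apply_one_one_zero_zero

theorem two_mul_apply_tmSubst_zero_zero (h : IsFactorAdditive φ) :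
    2 * φ (tmSubst [0, 0]) = φ [0, 1] - φ [0, 0] := by
  have h10 : φ [0, 1] = φ [0, 0] + φ [1, 0, 1] := by
    rw [h.apply_zero_one, ← h.apply_one_zero_zero]
    exact h.eq_add_concat _ le_rfl
  have h101 : φ [1, 0, 1] = φ (tmSubst [0, 0]) + φ [1, 1, 0, 1] := h.eq_add_cons _ (by simp)
  linear_combination -h10 - h101 - h.apply_one_one_zero_one

theorem two_pow_mul_apply_iterate_add (h : IsFactorAdditive φ) (n : ℕ) :
    2 ^ n * (φ (tmSubst^[n] [0, 0]) + φ (tmSubst^[n] [0, 1])) = φ [0, 0] + φ [0, 1] := by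
  induction n generalizing φ with
  | zero => simp
  | succ n ih =>
    simp only [Function.iterate_succ_apply']
    linear_combination 2 * ih h.comp_tmSubst + h.two_mul_apply_tmSubst_zero_zero +
      2 * h.apply_tmSubst_zero_one + 2 * h.apply_one_one

theorem apply_iterate_sub (h : IsFactorAdditive φ) (n : ℕ) :
    φ (tmSubst^[n] [0, 1]) - 2 * φ (tmSubst^[n] [0, 0]) =
      (-1) ^ n * (φ [0, 1] - 2 * φ [0, 0]) := by
  induction n generalizing φ with
  | zero => simp
  | succ n ih =>
    simp only [Function.iterate_succ_apply']
    linear_combination ih h.comp_tmSubst + (-1) ^ n * (h.apply_tmSubst_zero_one +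
      h.apply_one_one - h.two_mul_apply_tmSubst_zero_zero)

end CommRing

section Archimedean

variable {K : Type*} [Field K] [LinearOrder K] [IsStrictOrderedRing K] [Archimedean K]
  {φ : List ℕ → K}

theorem apply_zero_one_eq_two_mul (h : IsFactorAdditive φ) (hφ : ∀ l, 0 ≤ φ l) :
    φ [0, 1] = 2 * φ [0, 0] := by
  have hbound (n : ℕ) :
      2 ^ n * |φ [0, 1] - 2 * φ [0, 0]| ≤ 2 * (φ [0, 0] + φ [0, 1]) := by
    have hsub : |φ (tmSubst^[n] [0, 1]) - 2 * φ (tmSubst^[n] [0, 0])| =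
        |φ [0, 1] - 2 * φ [0, 0]| := by
      simp [h.apply_iterate_sub n, abs_mul]
    rw [← hsub, ← h.two_pow_mul_apply_iterate_add n, mul_left_comm]
    gcongr
    have := hφ (tmSubst^[n] [0, 0])
    have := hφ (tmSubst^[n] [0, 1])
    exact abs_le.2 ⟨by linarith, by linarith⟩
  by_contra hne
  have hpos : 0 < |φ [0, 1] - 2 * φ [0, 0]| := abs_pos.2 (sub_ne_zero.2 hne)
  obtain ⟨n, hn⟩ := pow_unbounded_of_one_lt
    (2 * (φ [0, 0] + φ [0, 1]) / |φ [0, 1] - 2 * φ [0, 0]|) (one_lt_two (α := K))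
  exact (hbound n).not_gt ((div_lt_iff₀ hpos).1 hn)

theorem apply_iterate_zero_zero (h : IsFactorAdditive φ) (hφ : ∀ l, 0 ≤ φ l) (n : ℕ) :
    φ (tmSubst^[n] [0, 0]) = (φ [0, 0] + φ [0, 1]) / (3 * 2 ^ n) := by
  have hn := (h.comp_tmSubst_iterate n).apply_zero_one_eq_two_mul fun l => hφ (tmSubst^[n] l)
  rw [eq_div_iff (by positivity), ← h.two_pow_mul_apply_iterate_add n, hn]
  ring

end Archimedean

end IsFactorAdditive

/-- The language of the Thue–Morse sequence, as a set, so that `tmLanguage.indicator ψ` is the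
extension by zero to all words of a function `ψ` given on the factors. -/
def tmLanguage : Set (List ℕ) := {l | IsFactor l}

section Zero

variable {R : Type*} [Zero R]

theorem indicator_tmLanguage_of_isFactor {l : List ℕ} (hl : IsFactor l) (ψ : List ℕ → R) :
    tmLanguage.indicator ψ l = ψ l :=
  Set.indicator_of_mem (s := tmLanguage) hl ψ

theorem indicator_tmLanguage_of_not_isFactor {l : List ℕ} (hl : ¬ IsFactor l) (ψ : List ℕ → R) :
    tmLanguage.indicator ψ l = 0 :=
  Set.indicator_of_notMem (s := tmLanguage) hl ψ

theorem apply_blk_append_blk (ψ : List ℕ → R) {i j : ℕ} (hi : i < 2) (hj : j < 2) (n : ℕ) :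
    ψ (blk i n ++ blk j n) = tmLanguage.indicator ψ (tmSubst^[n] [i, j]) := by
  rw [blk_append_blk hi hj]
  exact (indicator_tmLanguage_of_isFactor (isFactor_tmSubst_iterate.2 (isFactor_pair hi hj)) ψ).symm

end Zero

section AddCommMonoid

variable {R : Type*} [AddCommMonoid R] {ψ : List ℕ → R}

theorem indicator_tmLanguage_eq_add_cons
    (hψ : ∀ α, IsFactor α → ψ α =
      tmLanguage.indicator ψ (0 :: α) + tmLanguage.indicator ψ (1 :: α))
    {l : List ℕ} (hl : l ≠ []) :
    tmLanguage.indicator ψ l =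
      tmLanguage.indicator ψ (0 :: l) + tmLanguage.indicator ψ (1 :: l) := by
  by_cases hf : IsFactor l
  · rw [indicator_tmLanguage_of_isFactor hf, hψ l hf]
  · have hcons (i : ℕ) : ¬ IsFactor (i :: l) := fun h =>
      hf (h.of_infix (List.suffix_cons i l).isInfix hl)
    simp only [indicator_tmLanguage_of_not_isFactor, hf, hcons, not_false_eq_true, add_zero]

theorem indicator_tmLanguage_eq_add_concat
    (hψ : ∀ α, IsFactor α → ψ α =
      tmLanguage.indicator ψ (α ++ [0]) + tmLanguage.indicator ψ (α ++ [1]))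
    {l : List ℕ} (hl : l ≠ []) :
    tmLanguage.indicator ψ l =
      tmLanguage.indicator ψ (l ++ [0]) + tmLanguage.indicator ψ (l ++ [1]) := by
  by_cases hf : IsFactor l
  · rw [indicator_tmLanguage_of_isFactor hf, hψ l hf]
  · have hconcat (i : ℕ) : ¬ IsFactor (l ++ [i]) := fun h =>
      hf (h.of_infix (List.prefix_append l [i]).isInfix hl)
    simp only [indicator_tmLanguage_of_not_isFactor, hf, hconcat, not_false_eq_true, add_zero]

theorem isFactorAdditive_indicator_tmLanguage
    (hleft : ∀ α, IsFactor α → ψ α =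
      tmLanguage.indicator ψ (0 :: α) + tmLanguage.indicator ψ (1 :: α))
    (hright : ∀ α, IsFactor α → ψ α =
      tmLanguage.indicator ψ (α ++ [0]) + tmLanguage.indicator ψ (α ++ [1])) :
    IsFactorAdditive (tmLanguage.indicator ψ) where
  eq_zero _ hl := indicator_tmLanguage_of_not_isFactor hl ψ
  eq_add_cons _ hl :=
    indicator_tmLanguage_eq_add_cons hleft (List.ne_nil_of_length_pos (two_pos.trans_le hl))
  eq_add_concat _ hl :=
    indicator_tmLanguage_eq_add_concat hright (List.ne_nil_of_length_pos (two_pos.trans_le hl))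

end AddCommMonoid

open Classical in
theorem invariant_function_values_general {K : Type*} [Field K] [LinearOrder K]
    [IsStrictOrderedRing K] [Archimedean K] (ψ : List ℕ → K)
    (hnonneg : ∀ α : List ℕ, IsFactor α → 0 ≤ ψ α)
    (hleft : ∀ α : List ℕ, IsFactor α →
      ψ α = (if IsFactor (0 :: α) then ψ (0 :: α) else 0) +
            (if IsFactor (1 :: α) then ψ (1 :: α) else 0))
    (hright : ∀ α : List ℕ, IsFactor α →
      ψ α = (if IsFactor (α ++ [0]) then ψ (α ++ [0]) else 0) +
            (if IsFactor (α ++ [1]) then ψ (α ++ [1]) else 0))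
    (n : ℕ) :
    ψ (blk 0 n ++ blk 0 n) = (ψ [0] + ψ [1]) / (6 * 2 ^ n) ∧
    ψ (blk 1 n ++ blk 1 n) = (ψ [0] + ψ [1]) / (6 * 2 ^ n) ∧
    ψ (blk 0 n ++ blk 1 n) = (ψ [0] + ψ [1]) / (3 * 2 ^ n) ∧
    ψ (blk 1 n ++ blk 0 n) = (ψ [0] + ψ [1]) / (3 * 2 ^ n) := by
  set φ := tmLanguage.indicator ψ with hφ
  have hinv : IsFactorAdditive φ := isFactorAdditive_indicator_tmLanguage hleft hright
  have hφ_nonneg (l : List ℕ) : 0 ≤ φ l := Set.indicator_apply_nonneg (hnonneg l)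
  have hletter {i : ℕ} (hi : i < 2) : ψ [i] = φ [i, 0] + φ [i, 1] :=
    (indicator_tmLanguage_of_isFactor (isFactor_singleton hi) ψ).symm.trans
      (indicator_tmLanguage_eq_add_concat hright (List.cons_ne_nil _ _))
  have hmass : ψ [0] + ψ [1] = 2 * (φ [0, 0] + φ [0, 1]) := by
    rw [hletter two_pos, hletter one_lt_two, ← hinv.apply_zero_one, hinv.apply_one_one]
    ring
  have hn := hinv.comp_tmSubst_iterate n
  have h00 : φ (tmSubst^[n] [0, 0]) = (ψ [0] + ψ [1]) / (6 * 2 ^ n) := by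
    rw [hinv.apply_iterate_zero_zero hφ_nonneg, hmass]
    field
  have h01 : φ (tmSubst^[n] [0, 1]) = (ψ [0] + ψ [1]) / (3 * 2 ^ n) := by
    rw [hn.apply_zero_one_eq_two_mul fun l => hφ_nonneg _, h00]
    field
  simp only [apply_blk_append_blk ψ, two_pos, one_lt_two, ← hφ]
  exact ⟨h00, hn.apply_one_one.trans h00, h01, hn.apply_zero_one.symm.trans h01⟩

open Classical in
/-- Any strictly positive, normalized, two-sidedly additive function `ψ` on the factors of
the two-sided Thue–Morse sequence satisfies `ψ(0⁽ⁿ⁾0⁽ⁿ⁾) = ψ(1⁽ⁿ⁾1⁽ⁿ⁾) = 1/(6·2ⁿ)` and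
`ψ(0⁽ⁿ⁾1⁽ⁿ⁾) = ψ(1⁽ⁿ⁾0⁽ⁿ⁾) = 1/(3·2ⁿ)`. -/
theorem invariant_function_values (ψ : List ℕ → ℝ)
    (hpos : ∀ α : List ℕ, IsFactor α → 0 < ψ α)
    (hone : ψ [0] + ψ [1] = 1)
    (hleft : ∀ α : List ℕ, IsFactor α →
      ψ α = (if IsFactor (0 :: α) then ψ (0 :: α) else 0) +
            (if IsFactor (1 :: α) then ψ (1 :: α) else 0))
    (hright : ∀ α : List ℕ, IsFactor α →
      ψ α = (if IsFactor (α ++ [0]) then ψ (α ++ [0]) else 0) +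
            (if IsFactor (α ++ [1]) then ψ (α ++ [1]) else 0)) :
    ∀ n : ℕ,
      ψ (blk 0 n ++ blk 0 n) = 1 / (6 * 2 ^ n) ∧
      ψ (blk 1 n ++ blk 1 n) = 1 / (6 * 2 ^ n) ∧
      ψ (blk 0 n ++ blk 1 n) = 1 / (3 * 2 ^ n) ∧
      ψ (blk 1 n ++ blk 0 n) = 1 / (3 * 2 ^ n) := by
  simpa only [hone] using
    invariant_function_values_general ψ (fun α hα => (hpos α hα).le) hleft hright
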